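/- Let (w_n)_{n \ge n_0} (n_0 > 0) be a non-decreasing sequence of positive real numbers. Fix a real number \alpha > 1 and a positive integer s, and define F = {n \ge n_0 : w_{n+s} \ge \alpha w_n}. If F has infinite discrete logarithmic measure, i.e. \sum_{n \in F} 1/n = \infty, then \limsup_{r \to \infty} (\log\log w_r)/\log r \ge 1. -/

import Mathlib

/-!
If `log w n ≤ n ^ c` for all large `n`, with `c < 1`, then `∑ log w n / n ^ 2` converges. For a
monotone `f`, the convergence of `∑ f n / n ^ 2` forces that of `∑ (f (n + s) - f n) / n`, by
summation by parts: with `g n = f n / n`,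
`(f (n + s) - f n) / n = (g (n + s) - g n) + s * f (n + s) / (n * (n + s))`,
where `g` is bounded and the last term is comparable to `f (n + s) / (n + s) ^ 2`.
Taking `f = log ∘ w`, every `n` in `F` contributes at least `log α / n` to this sum.
-/

open Filter Finset

theorem sum_range_add_sub_comm {G : Type*} [AddCommGroup G] (g : ℕ → G) (s M : ℕ) :
    ∑ n ∈ range M, (g (n + s) - g n) = ∑ i ∈ range s, (g (M + i) - g i) := by
  have h := sum_range_add g s M
  rw [add_comm s M, sum_range_add] at h
  simp only [sum_sub_distrib, sub_eq_sub_iff_add_eq_add, add_comm _ s]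
  rw [add_comm, ← h, add_comm]

section SumDivSq

variable {f : ℕ → ℝ}

theorem div_le_four_mul_tsum_div_sq (hf : Monotone f) (hf0 : ∀ n, 0 ≤ f n)
    (hsum : Summable fun n : ℕ ↦ f n / (n : ℝ) ^ 2) (n : ℕ) :
    f n / n ≤ 4 * ∑' k : ℕ, f k / (k : ℝ) ^ 2 := by
  have hterm (k : ℕ) : 0 ≤ f k / (k : ℝ) ^ 2 := div_nonneg (hf0 k) (by positivity)
  have hdyadic : ∑ k ∈ Ico n (2 * n), f n / (2 * n : ℝ) ^ 2 ≤ ∑' k : ℕ, f k / (k : ℝ) ^ 2 := by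
    refine (sum_le_sum fun k hk ↦ ?_).trans (hsum.sum_le_tsum (Ico n (2 * n)) fun k _ ↦ hterm k)
    obtain ⟨hnk, hk2n⟩ := mem_Ico.1 hk
    have hk0 : (0 : ℝ) < k := by exact_mod_cast (by omega : 0 < k)
    have hk2n' : (k : ℝ) ≤ 2 * n := by exact_mod_cast hk2n.le
    exact div_le_div₀ (hf0 k) (hf hnk) (by positivity) (by gcongr)
  calc f n / n = 4 * ∑ k ∈ Ico n (2 * n), f n / (2 * n : ℝ) ^ 2 := by
        rcases n.eq_zero_or_pos with rfl | hn
        · simp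
        · rw [sum_const, Nat.card_Ico, two_mul, Nat.add_sub_cancel, nsmul_eq_mul]
          field_simp
          norm_num
    _ ≤ 4 * ∑' k : ℕ, f k / (k : ℝ) ^ 2 := by gcongr

theorem sub_div_le_sub_add_div_sq (hf0 : ∀ n, 0 ≤ f n) (s n : ℕ) :
    (f (n + s) - f n) / n ≤ (f (n + s) / (n + s : ℕ) - f n / n) +
      s * (1 + s) * (f (n + s) / ((n + s : ℕ) : ℝ) ^ 2) := by
  have hfs := hf0 (n + s)
  rcases n.eq_zero_or_pos with rfl | hn
  · simp only [Nat.cast_zero, div_zero, sub_zero]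
    positivity
  have hn1 : (1 : ℝ) ≤ n := by exact_mod_cast hn
  have hparts : (f (n + s) - f n) / n = (f (n + s) / (n + s : ℕ) - f n / n) +
      s * (f (n + s) / (n * (n + s : ℕ))) := by
    push_cast
    field_simp
    ring
  have hcompare : f (n + s) / (n * (n + s : ℕ)) ≤
      (1 + s) * (f (n + s) / ((n + s : ℕ) : ℝ) ^ 2) := by
    rw [mul_div_assoc', div_le_div_iff₀ (by positivity) (by positivity)]
    have : ((n + s : ℕ) : ℝ) ≤ (1 + s) * n := by
      push_cast
      nlinarith [(Nat.cast_nonneg s : (0 : ℝ) ≤ s)]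
    calc f (n + s) * ((n + s : ℕ) : ℝ) ^ 2 = f (n + s) * (n + s : ℕ) * (n + s : ℕ) := by ring
      _ ≤ f (n + s) * (n + s : ℕ) * ((1 + s) * n) := by gcongr
      _ = (1 + s) * f (n + s) * (n * (n + s : ℕ)) := by ring
  rw [hparts, mul_assoc]
  gcongr

theorem summable_sub_div_of_summable_div_sq_of_nonneg (hf : Monotone f) (hf0 : ∀ n, 0 ≤ f n)
    (hsum : Summable fun n : ℕ ↦ f n / (n : ℝ) ^ 2) (s : ℕ) :
    Summable fun n : ℕ ↦ (f (n + s) - f n) / n := by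
  set T := ∑' k : ℕ, f k / (k : ℝ) ^ 2
  have hg0 (n : ℕ) : 0 ≤ f n / n := div_nonneg (hf0 n) n.cast_nonneg
  have hshift : Summable fun n : ℕ ↦ f (n + s) / ((n + s : ℕ) : ℝ) ^ 2 :=
    (summable_nat_add_iff s).2 hsum
  set T' := ∑' n : ℕ, f (n + s) / ((n + s : ℕ) : ℝ) ^ 2
  refine summable_of_sum_range_le (c := s * (4 * T) + s * (1 + s) * T')
    (fun n ↦ div_nonneg (sub_nonneg.2 (hf (n.le_add_right s))) n.cast_nonneg) fun M ↦ ?_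
  have htelescope :
      ∑ n ∈ range M, (f (n + s) / (n + s : ℕ) - f n / n) ≤ s * (4 * T) := by
    rw [sum_range_add_sub_comm (fun n : ℕ ↦ f n / n), ← nsmul_eq_mul]
    simpa using sum_le_card_nsmul (range s) _ (4 * T) fun i _ ↦
      (sub_le_self _ (hg0 i)).trans (div_le_four_mul_tsum_div_sq hf hf0 hsum (M + i))
  have hremainder : ∑ n ∈ range M, f (n + s) / ((n + s : ℕ) : ℝ) ^ 2 ≤ T' :=
    hshift.sum_le_tsum _ fun n _ ↦ div_nonneg (hf0 _) (by positivity)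
  calc ∑ n ∈ range M, (f (n + s) - f n) / n
      ≤ ∑ n ∈ range M, ((f (n + s) / (n + s : ℕ) - f n / n) +
          s * (1 + s) * (f (n + s) / ((n + s : ℕ) : ℝ) ^ 2)) :=
        sum_le_sum fun n _ ↦ sub_div_le_sub_add_div_sq hf0 s n
    _ ≤ s * (4 * T) + s * (1 + s) * T' := by
        rw [sum_add_distrib, ← mul_sum]
        gcongr

theorem summable_sub_div_of_summable_div_sq (hf : Monotone f)
    (hsum : Summable fun n : ℕ ↦ f n / (n : ℝ) ^ 2) (s : ℕ) :
    Summable fun n : ℕ ↦ (f (n + s) - f n) / n := by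
  have hconst : Summable fun n : ℕ ↦ f 0 / (n : ℝ) ^ 2 := by
    simpa [div_eq_mul_inv] using (Real.summable_nat_pow_inv.2 one_lt_two).mul_left (f 0)
  simpa using summable_sub_div_of_summable_div_sq_of_nonneg (f := fun n ↦ f n - f 0)
    (fun m n hmn ↦ sub_le_sub_right (hf hmn) _) (fun n ↦ sub_nonneg.2 (hf n.zero_le))
    (by simpa [sub_div] using hsum.sub hconst) s

theorem summable_div_sq_of_eventually_le_rpow {b c : ℝ} (hc : c < 1)
    (hlower : ∀ n, b ≤ f n) (hupper : ∀ᶠ n : ℕ in atTop, f n ≤ (n : ℝ) ^ c) :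
    Summable fun n : ℕ ↦ f n / (n : ℝ) ^ 2 := by
  have hconst : Summable fun n : ℕ ↦ |b| * ((n : ℝ) ^ 2)⁻¹ :=
    (Real.summable_nat_pow_inv.2 one_lt_two).mul_left _
  have hpow : Summable fun n : ℕ ↦ (n : ℝ) ^ (c - 2) :=
    Real.summable_nat_rpow.2 (by linarith)
  refine (hconst.add hpow).of_norm_bounded_eventually_nat ?_
  filter_upwards [hupper, eventually_gt_atTop 0] with n hn hn0
  have hn0' : (0 : ℝ) < n := by exact_mod_cast hn0
  have habs : |f n| ≤ |b| + (n : ℝ) ^ c :=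
    abs_le.2 ⟨by linarith [hlower n, neg_abs_le b, Real.rpow_nonneg hn0'.le c],
      by linarith [abs_nonneg b]⟩
  calc ‖f n / (n : ℝ) ^ 2‖ = |f n| / (n : ℝ) ^ 2 := by simp
    _ ≤ (|b| + (n : ℝ) ^ c) / (n : ℝ) ^ 2 := by gcongr
    _ = |b| * ((n : ℝ) ^ 2)⁻¹ + (n : ℝ) ^ (c - 2) := by
        rw [add_div, div_eq_mul_inv, Real.rpow_sub hn0', Real.rpow_two]

end SumDivSq

theorem log_le_rpow_of_log_log_div_log_le {x y c : ℝ} (hx : 1 < x)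
    (h : Real.log (Real.log y) / Real.log x ≤ c) : Real.log y ≤ x ^ c := by
  have hx0 : 0 < x := one_pos.trans hx
  rcases le_or_gt (Real.log y) 0 with hy | hy
  · exact hy.trans (Real.rpow_nonneg hx0.le c)
  · rw [← Real.log_le_log_iff hy (Real.rpow_pos_of_pos hx0 c), Real.log_rpow hx0]
    exact (div_le_iff₀ (Real.log_pos hx)).1 h

section MonotonePositive

variable {w : ℕ → ℝ} {α : ℝ}

theorem summable_indicator_growth_of_summable_log_div_sq (hw : Monotone w) (hpos : ∀ n, 0 < w n)
    (hα : 1 < α) (s : ℕ) (hsum : Summable fun n : ℕ ↦ Real.log (w n) / (n : ℝ) ^ 2) :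
    Summable (Set.indicator {n : ℕ | α * w n ≤ w (n + s)} fun n : ℕ ↦ (1 : ℝ) / n) := by
  have hlog : Monotone fun n ↦ Real.log (w n) := fun m n hmn ↦ Real.log_le_log (hpos m) (hw hmn)
  have hlogα : 0 < Real.log α := Real.log_pos hα
  refine ((summable_sub_div_of_summable_div_sq hlog hsum s).mul_left (Real.log α)⁻¹).of_nonneg_of_le
    (Set.indicator_nonneg fun n _ ↦ by positivity)
    (Set.indicator_le' (fun n hn ↦ ?_) fun n _ ↦ ?_)
  · have hjump : Real.log α ≤ Real.log (w (n + s)) - Real.log (w n) := by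
      rw [le_sub_iff_add_le, ← Real.log_mul (by positivity) (hpos n).ne']
      exact Real.log_le_log (mul_pos (by positivity) (hpos n)) hn
    rw [mul_div_assoc', inv_mul_eq_div]
    gcongr
    exact (one_le_div hlogα).2 hjump
  · have := sub_nonneg.2 (hlog (n.le_add_right s))
    positivity

theorem one_le_limsup_log_log_div_log_of_not_summable (hw : Monotone w) (hpos : ∀ n, 0 < w n)
    (hα : 1 < α) (s : ℕ)
    (hdiv : ¬ Summable (Set.indicator {n : ℕ | α * w n ≤ w (n + s)} fun n : ℕ ↦ (1 : ℝ) / n)) :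
    (1 : EReal) ≤
      limsup (fun r : ℕ ↦ ((Real.log (Real.log (w r)) / Real.log r : ℝ) : EReal)) atTop := by
  by_contra! hlt
  obtain ⟨c, hlimsup, hc⟩ := EReal.lt_iff_exists_real_btwn.1 hlt
  have hupper : ∀ᶠ n : ℕ in atTop, Real.log (w n) ≤ (n : ℝ) ^ c := by
    filter_upwards [eventually_lt_of_limsup_lt hlimsup, eventually_gt_atTop 1] with n hn hn1
    exact log_le_rpow_of_log_log_div_log_le (by exact_mod_cast hn1) (by exact_mod_cast hn.le)
  have hlower (n : ℕ) : Real.log (w 0) ≤ Real.log (w n) :=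
    Real.log_le_log (hpos 0) (hw n.zero_le)
  exact hdiv (summable_indicator_growth_of_summable_log_div_sq hw hpos hα s
    (summable_div_sq_of_eventually_le_rpow (by exact_mod_cast hc) hlower hupper))

end MonotonePositive

/-- if a non-decreasing positive sequence `w` satisfies `w_{n+s} ≥ α w_n`
(`α > 1`, `s ≥ 1`) on a set of infinite discrete logarithmic measure, then
`limsup_{r→∞} (log log w_r)/(log r) ≥ 1`. -/
theorem limsup_loglog_ge_one_of_infinite_log_measure
    (n0 : ℕ) (hn0 : 0 < n0) (w : ℕ → ℝ)
    (hpos : ∀ n, n0 ≤ n → 0 < w n)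
    (hmono : ∀ n, n0 ≤ n → w n ≤ w (n + 1))
    (α : ℝ) (hα : 1 < α) (s : ℕ) (hs : 0 < s)
    (hdiv : ¬ Summable (Set.indicator {n : ℕ | n0 ≤ n ∧ α * w n ≤ w (n + s)}
      (fun n : ℕ => (1 : ℝ) / n))) :
    (1 : EReal) ≤ Filter.limsup
      (fun r : ℕ => ((Real.log (Real.log (w r)) / Real.log r : ℝ) : EReal))
      Filter.atTop := by
  have hmonoOn : MonotoneOn w (Set.Ici n0) := monotoneOn_nat_Ici_of_le_succ hmono
  let w' : ℕ → ℝ := fun n ↦ w (max n0 n)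
  have hw' : ∀ n, n0 ≤ n → w' n = w n := fun n hn ↦ congrArg w (max_eq_right hn)
  have hmono' : Monotone w' := fun m n hmn ↦
    hmonoOn (le_max_left n0 m) (le_max_left n0 n) (max_le_max_left n0 hmn)
  have hsubset : {n : ℕ | n0 ≤ n ∧ α * w n ≤ w (n + s)} ⊆ {n | α * w' n ≤ w' (n + s)} := by
    rintro n ⟨hn, hgrowth⟩
    rwa [Set.mem_ofPred_eq, hw' n hn, hw' (n + s) (hn.trans (n.le_add_right s))]
  have hlimsup := one_le_limsup_log_log_div_log_of_not_summable hmono'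
    (fun n ↦ hpos _ (le_max_left n0 n)) hα s fun hsum ↦ hdiv <| by
      simpa only [Set.indicator_indicator, Set.inter_eq_left.2 hsubset] using
        hsum.indicator {n | n0 ≤ n ∧ α * w n ≤ w (n + s)}
  refine hlimsup.trans_eq (limsup_congr ?_)
  filter_upwards [eventually_ge_atTop n0] with r hr
  rw [hw' r hr]
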